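/- For every natural number m with m ≥ 2 and every real number d, the sum over j from 1 to m−1 of (d − 4 + 4cos(2πj/m)) / (16 sin⁴(πj/m)) equals (4(m⁴ − 20m² + 19) + (d−4)(m⁴ + 10m² − 11))/720. -/

import Mathlib

open Real Finset

lemma aux_tele (a : ℝ) (n : ℕ) :
    2 * sin a * ∑ r ∈ range n, cos (2 * r * a) = sin ((2 * n - 1) * a) + sin a := by
  induction n with
  | zero => simp
  | succ n ih =>
    rw [sum_range_succ, mul_add, ih]
    push_cast
    have e1 : (2 * ((n : ℝ) + 1) - 1) * a = 2 * n * a + a := by ring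
    have e2 : (2 * (n : ℝ) - 1) * a = 2 * n * a - a := by ring
    rw [e1, e2, sin_add, sin_sub]; ring

lemma aux_sin_pos (m j : ℕ) (h1 : 1 ≤ j) (h2 : j < m) : 0 < sin (π * j / m) := by
  have hj : (0 : ℝ) < j := by exact_mod_cast h1
  have hjm : (j : ℝ) < m := by exact_mod_cast h2
  have hm : (0 : ℝ) < m := by linarith
  apply sin_pos_of_pos_of_lt_pi
  · positivity
  · rw [div_lt_iff₀ hm]
    exact mul_lt_mul_of_pos_left hjm pi_pos

lemma aux_cos_sum (m j : ℕ) (h1 : 1 ≤ j) (h2 : j < m) :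
    ∑ r ∈ range m, cos (2 * r * (π * j / m)) = 0 := by
  have hs := aux_sin_pos m j h1 h2
  have hm : (m : ℝ) ≠ 0 := by
    have : m ≠ 0 := by omega
    exact_mod_cast this
  have h := aux_tele (π * j / m) m
  have e : (2 * (m : ℝ) - 1) * (π * j / m) = j * (2 * π) - π * j / m := by
    field_simp
  rw [e, sin_nat_mul_two_pi_sub] at h
  have h' : 2 * sin (π * j / m) * ∑ r ∈ range m, cos (2 * r * (π * j / m)) = 0 := by
    rw [h]; ring
  rcases mul_eq_zero.mp h' with h | h
  · linarith
  · exact h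

lemma aux_cos_sum' (m r : ℕ) (h1 : 1 ≤ r) (h2 : r < m) :
    ∑ j ∈ Icc 1 (m - 1), cos (2 * r * (π * j / m)) = -1 := by
  have h := aux_cos_sum m r h1 h2
  have e : range m = insert 0 (Icc 1 (m - 1)) := by
    ext x; simp only [mem_range, mem_insert, mem_Icc]; omega
  rw [e, sum_insert (by simp)] at h
  have : ∑ j ∈ Icc 1 (m - 1), cos (2 * r * (π * j / m))
      = ∑ j ∈ Icc 1 (m - 1), cos (2 * j * (π * r / m)) := by
    apply sum_congr rfl; intros; congr 1; ring
  rw [this]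
  simp at h
  linarith

lemma aux_cos_rec (r : ℕ) (a : ℝ) :
    1 - cos (2 * ((r + 2 : ℕ) : ℝ) * a) = 2 * (1 - cos (2 * ((r + 1 : ℕ) : ℝ) * a))
      - (1 - cos (2 * r * a)) + 4 * sin a ^ 2 * cos (2 * ((r + 1 : ℕ) : ℝ) * a) := by
  push_cast
  have e1 : 2 * ((r : ℝ) + 2) * a = 2 * (r + 1) * a + 2 * a := by ring
  have e2 : 2 * (r : ℝ) * a = 2 * (r + 1) * a - 2 * a := by ring
  rw [e1, e2, cos_add, cos_sub, cos_two_mul, sin_sq]; ring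

lemma aux_cos_one (a : ℝ) : 1 - cos (2 * ((1 : ℕ) : ℝ) * a) = 2 * sin a ^ 2 := by
  rw [sin_sq]; push_cast; rw [mul_one, cos_two_mul]; ring

lemma aux_U (m : ℕ) (hm : 2 ≤ m) (r : ℕ) : (r ≤ m → ∑ j ∈ Icc 1 (m - 1),
    (1 - cos (2 * r * (π * j / m))) / sin (π * j / m) ^ 2 = 2 * (r : ℝ) * ((m : ℝ) - (r : ℝ))) ∧
    (r + 1 ≤ m → ∑ j ∈ Icc 1 (m - 1),
    (1 - cos (2 * ((r + 1 : ℕ) : ℝ) * (π * j / m))) / sin (π * j / m) ^ 2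
      = 2 * ((r + 1 : ℕ) : ℝ) * (m - ((r + 1 : ℕ) : ℝ))) := by
  induction r with
  | zero =>
    refine ⟨fun _ => by simp, fun _ => ?_⟩
    have : ∀ j ∈ Icc 1 (m - 1),
      (1 - cos (2 * ((0 + 1 : ℕ) : ℝ) * (π * j / m))) / sin (π * j / m) ^ 2 = 2 := by
      intro j hj
      rw [mem_Icc] at hj
      have := aux_sin_pos m j hj.1 (by omega)
      rw [zero_add, aux_cos_one]; field_simp
    rw [sum_congr rfl this]
    simp [Nat.cast_sub (show 1 ≤ m by omega)]
    ring
  | succ r ih =>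
    refine ⟨ih.2, fun h => ?_⟩
    have h0 := ih.1 (by omega)
    have h1 := ih.2 (by omega)
    have hc := aux_cos_sum' m (r + 1) (by omega) (by omega)
    have : ∀ j ∈ Icc 1 (m - 1),
      (1 - cos (2 * ((r + 1 + 1 : ℕ) : ℝ) * (π * j / m))) / sin (π * j / m) ^ 2 =
       2 * ((1 - cos (2 * ((r + 1 : ℕ) : ℝ) * (π * j / m))) / sin (π * j / m) ^ 2)
       - (1 - cos (2 * r * (π * j / m))) / sin (π * j / m) ^ 2
       + 4 * cos (2 * ((r + 1 : ℕ) : ℝ) * (π * j / m)) := by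
      intro j hj
      rw [mem_Icc] at hj
      have := aux_sin_pos m j hj.1 (by omega)
      rw [show r + 1 + 1 = r + 2 from rfl, aux_cos_rec]; field_simp
    rw [sum_congr rfl this, sum_add_distrib, sum_sub_distrib, ← mul_sum, ← mul_sum, h0, h1, hc]
    push_cast; ring

lemma aux_V (m : ℕ) (hm : 2 ≤ m) (S : ℝ)
    (hS : ∑ j ∈ Icc 1 (m - 1), 1 / sin (π * j / m) ^ 2 = S) (r : ℕ) :
    (r ≤ m → ∑ j ∈ Icc 1 (m - 1),
    (1 - cos (2 * r * (π * j / m))) / sin (π * j / m) ^ 4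
      = 2 * S * r ^ 2 - 4 * m * (r ^ 3 - r) / 3 + 2 * (r ^ 4 - r ^ 2) / 3) ∧
    (r + 1 ≤ m → ∑ j ∈ Icc 1 (m - 1),
    (1 - cos (2 * ((r + 1 : ℕ) : ℝ) * (π * j / m))) / sin (π * j / m) ^ 4
      = 2 * S * ((r + 1 : ℕ) : ℝ) ^ 2 - 4 * m * (((r + 1 : ℕ) : ℝ) ^ 3 - ((r + 1 : ℕ) : ℝ)) / 3
        + 2 * (((r + 1 : ℕ) : ℝ) ^ 4 - ((r + 1 : ℕ) : ℝ) ^ 2) / 3) := by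
  induction r with
  | zero =>
    refine ⟨fun _ => by simp, fun _ => ?_⟩
    have : ∀ j ∈ Icc 1 (m - 1),
      (1 - cos (2 * ((0 + 1 : ℕ) : ℝ) * (π * j / m))) / sin (π * j / m) ^ 4
        = 2 * (1 / sin (π * j / m) ^ 2) := by
      intro j hj
      rw [mem_Icc] at hj
      have := aux_sin_pos m j hj.1 (by omega)
      rw [zero_add, aux_cos_one]; field_simp
    rw [sum_congr rfl this, ← mul_sum, hS]
    simp
  | succ r ih =>
    refine ⟨ih.2, fun h => ?_⟩
    have h0 := ih.1 (by omega)
    have h1 := ih.2 (by omega)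
    have hU := (aux_U m hm r).2 (by omega)
    have : ∀ j ∈ Icc 1 (m - 1),
      (1 - cos (2 * ((r + 1 + 1 : ℕ) : ℝ) * (π * j / m))) / sin (π * j / m) ^ 4 =
       2 * ((1 - cos (2 * ((r + 1 : ℕ) : ℝ) * (π * j / m))) / sin (π * j / m) ^ 4)
       - (1 - cos (2 * r * (π * j / m))) / sin (π * j / m) ^ 4
       + 4 * (1 / sin (π * j / m) ^ 2
        - (1 - cos (2 * ((r + 1 : ℕ) : ℝ) * (π * j / m))) / sin (π * j / m) ^ 2) := by
      intro j hj
      rw [mem_Icc] at hj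
      have := aux_sin_pos m j hj.1 (by omega)
      rw [show r + 1 + 1 = r + 2 from rfl, aux_cos_rec]; field_simp; ring
    rw [sum_congr rfl this, sum_add_distrib, sum_sub_distrib, ← mul_sum, ← mul_sum,
      sum_sub_distrib, h0, h1, hU, hS]
    push_cast; ring

/-- Averaging over `r` recovers the power sums. -/
lemma aux_avg (m k : ℕ) :
    ∑ r ∈ range m, ∑ j ∈ Icc 1 (m - 1),
      (1 - cos (2 * r * (π * j / m))) / sin (π * j / m) ^ k
      = m * ∑ j ∈ Icc 1 (m - 1), 1 / sin (π * j / m) ^ k := by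
  rw [sum_comm, mul_sum]
  apply sum_congr rfl
  intro j hj
  rw [mem_Icc] at hj
  rw [← sum_div, sum_sub_distrib, aux_cos_sum m j hj.1 (by omega)]
  simp [div_eq_mul_inv]

lemma aux_poly2 (x : ℝ) (n : ℕ) : ∑ r ∈ range n, 2 * (r : ℝ) * (x - r)
    = x * (n * (n - 1)) - n * (n - 1) * (2 * n - 1) / 3 := by
  induction n with
  | zero => simp
  | succ n ih => rw [sum_range_succ, ih]; push_cast; ring

lemma aux_poly4 (x S : ℝ) (n : ℕ) : ∑ r ∈ range n,
    (2 * S * (r : ℝ) ^ 2 - 4 * x * (r ^ 3 - r) / 3 + 2 * (r ^ 4 - r ^ 2) / 3)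
    = (2 * S - 2 / 3) * (n * (n - 1) * (2 * n - 1) / 6)
      - 4 * x / 3 * ((n * (n - 1) / 2) ^ 2 - n * (n - 1) / 2)
      + 2 / 3 * (n * (n - 1) * (2 * n - 1) * (3 * n ^ 2 - 3 * n - 1) / 30) := by
  induction n with
  | zero => simp
  | succ n ih => rw [sum_range_succ, ih]; push_cast; ring

lemma aux_S2 (m : ℕ) (hm : 2 ≤ m) :
    ∑ j ∈ Icc 1 (m - 1), 1 / sin (π * j / m) ^ 2 = ((m : ℝ) ^ 2 - 1) / 3 := by
  have hm0 : (m : ℝ) ≠ 0 := by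
    have : m ≠ 0 := by omega
    exact_mod_cast this
  have h := aux_avg m 2
  rw [sum_congr rfl (fun r hr => (aux_U m hm r).1 (mem_range.mp hr).le), aux_poly2] at h
  apply mul_left_cancel₀ hm0
  rw [← h]; ring

lemma aux_S4 (m : ℕ) (hm : 2 ≤ m) :
    ∑ j ∈ Icc 1 (m - 1), 1 / sin (π * j / m) ^ 4 = ((m : ℝ) ^ 4 + 10 * m ^ 2 - 11) / 45 := by
  have hm0 : (m : ℝ) ≠ 0 := by
    have : m ≠ 0 := by omega
    exact_mod_cast this
  have h := aux_avg m 4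
  rw [sum_congr rfl (fun r hr => (aux_V m hm _ (aux_S2 m hm) r).1 (mem_range.mp hr).le),
    aux_poly4] at h
  apply mul_left_cancel₀ hm0
  rw [← h]; ring

/-- Example 3.5 (analytic content): for every integer `m ≥ 2` and every real `d`,
`∑_{j=1}^{m-1} (d − 4 + 4cos(2πj/m)) / (16 sin⁴(πj/m))
  = (4(m⁴ − 20m² + 19) + (d−4)(m⁴ + 10m² − 11))/720`. -/
theorem b01_codim_four_sum (m : ℕ) (hm : 2 ≤ m) (d : ℝ) :
    ∑ j ∈ Finset.Icc 1 (m - 1),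
        (d - 4 + 4 * Real.cos (2 * π * j / m)) / (16 * (Real.sin (π * j / m)) ^ 4)
      = (4 * ((m : ℝ) ^ 4 - 20 * m ^ 2 + 19) + (d - 4) * ((m : ℝ) ^ 4 + 10 * m ^ 2 - 11)) / 720 := by
  have : ∀ j ∈ Finset.Icc 1 (m - 1),
      (d - 4 + 4 * Real.cos (2 * π * j / m)) / (16 * (Real.sin (π * j / m)) ^ 4)
      = d / 16 * (1 / sin (π * j / m) ^ 4) - 1 / 2 * (1 / sin (π * j / m) ^ 2) := by
    intro j hj
    rw [mem_Icc] at hj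
    have hs := aux_sin_pos m j hj.1 (by omega)
    have e : cos (2 * π * j / m) = 1 - 2 * sin (π * j / m) ^ 2 := by
      rw [show 2 * π * j / m = 2 * (π * j / m) by ring, cos_two_mul, sin_sq]; ring
    rw [e]
    generalize sin (π * j / m) = s at hs
    field_simp
    ring
  rw [sum_congr rfl this, sum_sub_distrib, ← mul_sum, ← mul_sum, aux_S2 m hm, aux_S4 m hm]
  ring
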